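/- Assume β² = i. The following assignments define Q-module structures: X⁺₁ and X⁻₁ are one-dimensional with K acting by +1 and −1 respectively and E, F acting by 0; X⁺₂ and X⁻₂ are two-dimensional with basis v₀, v₁ and actions K·v₀ = ±i·v₀, K·v₁ = ∓i·v₁, E·v₀ = 0, E·v₁ = ±v₀, F·v₀ = v₁, F·v₁ = 0. For a finite-dimensional Q-module V, let qTr_V : Q → ℂ be qTr_V(a) = Tr_V(K·a) (the q-trace with balancing element g = K^{-1}), and let χ_V = (qTr_V ⊗ id)(M) ∈ Q be its image under the Drinfeld mapping, where M = R₂₁·R. Then χ_{X⁺₁} = 1, χ_{X⁻₁} = −K², χ_{X⁺₂} = 4·C and χ_{X⁻₂} = −4·C·K², where C = FE − (i/4)(K − K^{-1}) is the Casimir element. These four elements, together with the five-dimensionality of the centre, give a four-dimensional subspace of the centre of Q. -/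

import Mathlib

open TensorProduct

set_option maxHeartbeats 1000000
set_option synthInstance.maxHeartbeats 400000

noncomputable section

/-- Generators of the restricted quantum group `Q = \bar U_i sl(2)`. -/
inductive QGen : Type
  | E | F | K | Kinv
deriving DecidableEq

/-- The free algebra on the generators. -/
abbrev FA : Type := FreeAlgebra ℂ QGen

def ιE : FA := FreeAlgebra.ι ℂ QGen.E
def ιF : FA := FreeAlgebra.ι ℂ QGen.F
def ιK : FA := FreeAlgebra.ι ℂ QGen.K
def ιKi : FA := FreeAlgebra.ι ℂ QGen.Kinv

/-- Defining relations of `\bar U_i sl(2)` (at `q = i`, i.e. `p = 2`). -/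
inductive QRel : FA → FA → Prop
  | KKi : QRel (ιK * ιKi) 1
  | KiK : QRel (ιKi * ιK) 1
  | KEKi : QRel (ιK * ιE * ιKi) (-ιE)
  | KFKi : QRel (ιK * ιF * ιKi) (-ιF)
  | EF : QRel (ιE * ιF - ιF * ιE) ((2 * Complex.I)⁻¹ • (ιK - ιKi))
  | Esq : QRel (ιE ^ 2) 0
  | Fsq : QRel (ιF ^ 2) 0
  | K4 : QRel (ιK ^ 4) 1

/-- The restricted quantum group `\bar U_i sl(2)`: the quotient of the free algebra
by the two-sided ideal generated by the defining relations. -/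
abbrev Q : Type := RingQuot QRel

def gE : Q := RingQuot.mkAlgHom ℂ QRel ιE
def gF : Q := RingQuot.mkAlgHom ℂ QRel ιF
def gK : Q := RingQuot.mkAlgHom ℂ QRel ιK
def gKi : Q := RingQuot.mkAlgHom ℂ QRel ιKi

section Gadgets

variable (k : Type) [Field k] (A : Type) [Ring A] [Algebra k A]

abbrev TP2 : Type := A ⊗[k] A
abbrev TP3 : Type := A ⊗[k] (A ⊗[k] A)
abbrev TP4 : Type := A ⊗[k] (A ⊗[k] (A ⊗[k] A))

/-- Multiplication `a ⊗ b ↦ a * b`. -/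
def mulA : TP2 k A →ₗ[k] A := LinearMap.mul' k A

/-- Tensor flip `a ⊗ b ↦ b ⊗ a`. -/
def flipA : TP2 k A →ₗ[k] TP2 k A := (TensorProduct.comm k A A).toLinearMap

/-- `a ↦ a ⊗ 1`. -/
def lTen : A →ₗ[k] TP2 k A := (TensorProduct.mk k A A).flip 1

/-- `a ↦ 1 ⊗ a`. -/
def rTen : A →ₗ[k] TP2 k A := TensorProduct.mk k A A 1

/-- `a ⊗ b ↦ a ⊗ b ⊗ 1`. -/
def emb12 : TP2 k A →ₗ[k] TP3 k A := TensorProduct.map LinearMap.id (lTen k A)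

/-- `a ⊗ b ↦ a ⊗ 1 ⊗ b`. -/
def emb13 : TP2 k A →ₗ[k] TP3 k A := TensorProduct.map LinearMap.id (rTen k A)

/-- `a ⊗ b ↦ 1 ⊗ a ⊗ b`. -/
def emb23 : TP2 k A →ₗ[k] TP3 k A := TensorProduct.mk k A (TP2 k A) 1

/-- `a ⊗ b ⊗ c ↦ a ⊗ c ⊗ b`. -/
def perm132 : TP3 k A →ₗ[k] TP3 k A := TensorProduct.map LinearMap.id (flipA k A)

/-- `a ⊗ b ⊗ c ↦ b ⊗ c ⊗ a`. -/
def perm231 : TP3 k A →ₗ[k] TP3 k A :=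
  (TensorProduct.assoc k A A A).toLinearMap ∘ₗ (TensorProduct.comm k A (TP2 k A)).toLinearMap

/-- `a ⊗ b ⊗ c ↦ c ⊗ a ⊗ b`. -/
def perm312 : TP3 k A →ₗ[k] TP3 k A :=
  (TensorProduct.comm k (TP2 k A) A).toLinearMap ∘ₗ (TensorProduct.assoc k A A A).symm.toLinearMap

/-- `a ⊗ b ⊗ c ↦ b ⊗ a ⊗ c`. -/
def perm213 : TP3 k A →ₗ[k] TP3 k A :=
  (TensorProduct.assoc k A A A).toLinearMap ∘ₗ
    (TensorProduct.map (flipA k A) LinearMap.id) ∘ₗ (TensorProduct.assoc k A A A).symm.toLinearMap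

variable {k A}

/-- `(Δ ⊗ id)` on two tensor factors, landing in the triple tensor product. -/
def copL (D : A →ₐ[k] TP2 k A) : TP2 k A →ₗ[k] TP3 k A :=
  (TensorProduct.assoc k A A A).toLinearMap ∘ₗ TensorProduct.map D.toLinearMap LinearMap.id

/-- `(id ⊗ Δ)` on two tensor factors. -/
def copR (D : A →ₐ[k] TP2 k A) : TP2 k A →ₗ[k] TP3 k A :=
  TensorProduct.map LinearMap.id D.toLinearMap

/-- `(ε ⊗ id) : A ⊗ A → A`. -/
def cuL (ce : A →ₐ[k] k) : TP2 k A →ₗ[k] A :=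
  (TensorProduct.lid k A).toLinearMap ∘ₗ TensorProduct.map ce.toLinearMap LinearMap.id

/-- `(id ⊗ ε) : A ⊗ A → A`. -/
def cuR (ce : A →ₐ[k] k) : TP2 k A →ₗ[k] A :=
  (TensorProduct.rid k A).toLinearMap ∘ₗ TensorProduct.map LinearMap.id ce.toLinearMap

/-- `(id ⊗ ε ⊗ id) : A ⊗ A ⊗ A → A ⊗ A`. -/
def cuMid (ce : A →ₐ[k] k) : TP3 k A →ₗ[k] TP2 k A :=
  TensorProduct.map LinearMap.id (cuL ce)

/-- `(Δ ⊗ id ⊗ id)`. -/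
def cop4_1 (D : A →ₐ[k] TP2 k A) : TP3 k A →ₗ[k] TP4 k A :=
  (TensorProduct.assoc k A A (TP2 k A)).toLinearMap ∘ₗ TensorProduct.map D.toLinearMap LinearMap.id

/-- `(id ⊗ Δ ⊗ id)`. -/
def cop4_2 (D : A →ₐ[k] TP2 k A) : TP3 k A →ₗ[k] TP4 k A :=
  TensorProduct.map LinearMap.id (copL D)

/-- `(id ⊗ id ⊗ Δ)`. -/
def cop4_3 (D : A →ₐ[k] TP2 k A) : TP3 k A →ₗ[k] TP4 k A :=
  TensorProduct.map LinearMap.id (copR D)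

/-- `a ⊗ b ⊗ c ↦ a ⊗ b ⊗ c ⊗ 1`, i.e. `Φ ↦ Φ ⊗ 1`. -/
def pad4 : TP3 k A →ₗ[k] TP4 k A :=
  TensorProduct.map LinearMap.id (TensorProduct.map LinearMap.id (lTen k A))

/-- `a ⊗ b ⊗ c ↦ f(a) * g(b) * h(c)`. -/
def tmap3 (f g h : A →ₗ[k] A) : TP3 k A →ₗ[k] A :=
  mulA k A ∘ₗ TensorProduct.map f (mulA k A ∘ₗ TensorProduct.map g h)

/-- `a ⊗ b ↦ S(a) * b`, used in the antipode axiom `m ∘ (S ⊗ id) ∘ Δ = 1·ε`. -/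
def antipL (s : A →ₗ[k] A) : TP2 k A →ₗ[k] A := mulA k A ∘ₗ TensorProduct.map s LinearMap.id

/-- `a ⊗ b ↦ a * S(b)`. -/
def antipR (s : A →ₗ[k] A) : TP2 k A →ₗ[k] A := mulA k A ∘ₗ TensorProduct.map LinearMap.id s

end Gadgets

/-- Central idempotent `e₀ = (1 + K²)/2`. -/
def e0 : Q := (2:ℂ)⁻¹ • (1 + gK ^ 2)

/-- Central idempotent `e₁ = (1 − K²)/2`. -/
def e1 : Q := (2:ℂ)⁻¹ • (1 - gK ^ 2)

/-- `f⁺ = −i F`. -/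
def fp : Q := (-Complex.I) • gF

/-- `f⁻ = E K⁻¹`. -/
def fm : Q := gE * gKi

/-- The Casimir element `C = FE − (i/4)(K − K⁻¹)`. -/
def Cas : Q := gF * gE - (Complex.I / 4) • (gK - gKi)

def t2 (a b : Q) : TP2 ℂ Q := a ⊗ₜ[ℂ] b

def t3 (a b c : Q) : TP3 ℂ Q := a ⊗ₜ[ℂ] (b ⊗ₜ[ℂ] c)

def eEF : Q := gE * gF
def eEK : Q := gE * gK
def eFK : Q := gF * gK
def eEFK : Q := gE * gF * gK

/-- `Φ^{010}` component of the coassociator. -/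
def Phi010 : TP3 ℂ Q :=
  t3 1 1 1 - (1 + Complex.I) • t3 gE gK gF + (1 - Complex.I) • t3 eFK gK eEK
    + (2:ℂ) • t3 eEFK 1 eEFK

/-- `Φ^{101}` component of the coassociator. -/
def Phi101 : TP3 ℂ Q :=
  (Complex.I - 1) • t3 1 gF eEK + t3 1 gK 1 + (2:ℂ) • t3 1 eEF eEFK
    - (1 + Complex.I) • t3 1 eEK gF - (1 + Complex.I) • t3 gE eFK 1
    + (2 * Complex.I) • t3 gE eEFK gF + (1 - Complex.I) • t3 eFK gE 1
    - (2 * Complex.I) • t3 eFK eEFK eEK - (2:ℂ) • t3 eEFK eEF 1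

/-- `Φ^{111}` component of the coassociator. -/
def Phi111 (β : ℂ) : TP3 ℂ Q :=
  (Complex.I * β ^ 2) • (
    (1 + Complex.I) • t3 1 gF eEK - t3 1 gK 1 - (2:ℂ) • t3 1 eEF 1
      - (2 * Complex.I) • t3 1 eEF eEFK + (1 + Complex.I) • t3 1 eEK gF
      - (1 + Complex.I) • t3 gE 1 gF + (1 + Complex.I) • t3 gE eFK 1
      + (2 * Complex.I) • t3 gE eFK eEFK + (2:ℂ) • t3 gE eEFK gF
      - (1 + Complex.I) • t3 eFK 1 eEK + (1 + Complex.I) • t3 eFK gE 1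
      + (2 * Complex.I) • t3 eFK gE eEFK + (2:ℂ) • t3 eFK eEFK eEK
      + (2 * Complex.I) • t3 eEFK gF eEK + (2 * Complex.I) • t3 eEFK gK eEFK
      - (2 * Complex.I) • t3 eEFK eEF 1 + (2 * Complex.I) • t3 eEFK eEK gF
      + (4:ℂ) • t3 eEFK eEF eEFK)

/-- The coassociator `Φ` of the quasi-Hopf algebra structure on `Q`. -/
def Phi (β : ℂ) : TP3 ℂ Q :=
  t3 e0 e0 e0 + t3 e1 e0 e0 + Phi010 * t3 e0 e1 e0 + t3 e0 e0 e1
    + t3 e1 e1 e0 + Phi101 * t3 e1 e0 e1 + t3 e0 e1 e1 + Phi111 β * t3 e1 e1 e1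

def R00 : TP2 ℂ Q :=
  (2:ℂ)⁻¹ • ((t2 1 1 + t2 1 gK + t2 gK 1 - t2 gK gK) * (t2 1 1 + (2 * Complex.I) • t2 gE gF))

def R01 : TP2 ℂ Q :=
  (2:ℂ)⁻¹ • ((t2 1 1 - Complex.I • t2 1 gK + t2 gK 1 + Complex.I • t2 gK gK) *
    (t2 1 1 + (1 - Complex.I) • t2 eFK eEK - (1 - Complex.I) • t2 gE gF
      + (1 + Complex.I) • t2 eEFK 1 + (2 * Complex.I) • t2 eEFK eEFK))

def R10 : TP2 ℂ Q :=
  (2:ℂ)⁻¹ • ((t2 1 1 + t2 1 gK - Complex.I • t2 gK 1 + Complex.I • t2 gK gK) *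
    (t2 1 gK + (1 - Complex.I) • t2 eFK gE + (1 - Complex.I) • t2 gE eFK
      - (1 - Complex.I) • t2 1 eEF - (2 * Complex.I) • t2 eEFK eEF))

def R11 (β : ℂ) : TP2 ℂ Q :=
  (β / 2) • ((t2 1 1 - Complex.I • t2 1 gK - Complex.I • t2 gK 1 + t2 gK gK) *
    ((-Complex.I) • t2 gK 1 + (2 * Complex.I) • t2 eEK gF + (1 - Complex.I) • t2 gK eEFK
      - (1 + Complex.I) • t2 eEF 1 - (2 * Complex.I) • t2 eEF eEFK))

/-- The universal R-matrix `R` of the quasi-triangular quasi-Hopf structure on `Q`. -/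
def Rmat (β : ℂ) : TP2 ℂ Q :=
  R00 * t2 e0 e0 + R01 * t2 e0 e1 + R10 * t2 e1 e0 + R11 β * t2 e1 e1

/-- The standard R-matrix `R_st` of the quotient `Q/(K²-1)`. -/
def Rst : TP2 ℂ Q :=
  (2:ℂ)⁻¹ • ∑ m ∈ Finset.range 2, ∑ n ∈ Finset.range 2,
    ((-1:ℂ) ^ (m * n)) • (t2 (gK ^ m) (gK ^ n) * (t2 1 1 + (2 * Complex.I) • t2 gE gF))

/-- The monodromy matrix `M = R₂₁ · R`. -/
def Mmat (β : ℂ) : TP2 ℂ Q := flipA ℂ Q (Rmat β) * Rmat β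

/-- The ribbon element `v = (e₀ − iβ K e₁)(1 − 2 f⁺ f⁻)`. -/
def vRib (β : ℂ) : Q := (e0 - (Complex.I * β) • (gK * e1)) * (1 - (2:ℂ) • (fp * fm))

/-- The coevaluation element `β = e₀ − 2iβ² C e₁`. -/
def bbEl (β : ℂ) : Q := e0 - (2 * Complex.I * β ^ 2) • (Cas * e1)

/-- `b ⊗ c ↦ S(b · bb · S(c))`, inner part of the Drinfeld element. -/
def uInner (S : Q →ₗ[ℂ] Q) (bb : Q) : TP2 ℂ Q →ₗ[ℂ] Q :=
  S ∘ₗ mulA ℂ Q ∘ₗ TensorProduct.map (LinearMap.mulRight ℂ bb) S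

/-- `Φ' ⊗ Φ'' ⊗ Φ''' ↦ S(Φ'' · bb · S(Φ''')) ⊗ Φ'`. -/
def uMap1 (S : Q →ₗ[ℂ] Q) (bb : Q) : TP3 ℂ Q →ₗ[ℂ] TP2 ℂ Q :=
  TensorProduct.map (uInner S bb) LinearMap.id ∘ₗ (TensorProduct.comm ℂ Q (TP2 ℂ Q)).toLinearMap

/-- `R' ⊗ R'' ↦ S(R'') · al · R'`. -/
def uMap2 (S : Q →ₗ[ℂ] Q) (al : Q) : TP2 ℂ Q →ₗ[ℂ] Q :=
  mulA ℂ Q ∘ₗ TensorProduct.map (LinearMap.mulRight ℂ al ∘ₗ S) LinearMap.id ∘ₗ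
    (TensorProduct.comm ℂ Q Q).toLinearMap

/-- `(x ⊗ a) ⊗ (R' ⊗ R'') ↦ x · (S(R'') · al · R') · a`. -/
def uBig (S : Q →ₗ[ℂ] Q) (al : Q) : TP2 ℂ Q ⊗[ℂ] TP2 ℂ Q →ₗ[ℂ] Q :=
  mulA ℂ Q ∘ₗ TensorProduct.map LinearMap.id (mulA ℂ Q ∘ₗ (TensorProduct.comm ℂ Q Q).toLinearMap)
    ∘ₗ (TensorProduct.assoc ℂ Q Q Q).toLinearMap ∘ₗ TensorProduct.map LinearMap.id (uMap2 S al)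

/-- The Drinfeld element `u = Σ S(Φ''·b·S(Φ'''))·S(R'')·α·R'·Φ'` (with `α = 1`). -/
def uDrin (β : ℂ) (S : Q →ₗ[ℂ] Q) : Q :=
  uBig S 1 (uMap1 S (bbEl β) (Phi β) ⊗ₜ[ℂ] Rmat β)

/-- The balancing element `g = b · S(α) · v⁻¹ · u` (with `α = 1`). -/
def balG (β : ℂ) (S : Q →ₗ[ℂ] Q) : Q :=
  bbEl β * S 1 * Ring.inverse (vRib β) * uDrin β S

/-- The cointegral `c = (β²/i)·E·F·(1 + K + K² + K³)`. -/
def cInt (β : ℂ) : Q := (β ^ 2 / Complex.I) • (gE * gF * (1 + gK + gK ^ 2 + gK ^ 3))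

/-- The q-trace of a one-dimensional representation, with balancing element `K⁻¹`. -/
def qTr1 (ρ : Q →ₐ[ℂ] ℂ) : Q →ₗ[ℂ] ℂ := ρ.toLinearMap ∘ₗ LinearMap.mulLeft ℂ gK

/-- The q-trace of a two-dimensional (matrix) representation, with balancing element `K⁻¹`. -/
def qTrM (ρ : Q →ₐ[ℂ] Matrix (Fin 2) (Fin 2) ℂ) : Q →ₗ[ℂ] ℂ :=
  Matrix.traceLinearMap (Fin 2) ℂ ℂ ∘ₗ ρ.toLinearMap ∘ₗ LinearMap.mulLeft ℂ gK

/-- The Drinfeld mapping `φ ↦ (φ ⊗ id)(M)`. -/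
def drinfeldImg (β : ℂ) (φ : Q →ₗ[ℂ] ℂ) : Q :=
  (TensorProduct.lid ℂ Q) (TensorProduct.map φ LinearMap.id (Mmat β))

/-!
Since `K²` is central, `Q` has the orthogonal central idempotents `e0, e1`, and the monodromy
matrix is the sum of its components along `e_i ⊗ e_j`. On `X^±₁` the idempotent `e0` acts by `1`,
on `X^±₂` the idempotent `e1` does, so `ρ ⊗ id` retains only two of the four components, and taking
the trace gives `s e0 + e1`, respectively `4 C (s e0 + e1)`, for `X^s`. The element `s e0 + e1` is
`1` for `s = 1` and `-K²` for `s = -1`.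

The monomials `w K^k` with `w ∈ {1, E, F, EF}` and `k < 4` are a basis of `Q`: they span because
their span is stable under left multiplication by the generators, and they are independent because
on the module induced from the character `K ↦ l` (`l⁴ = 1`) the coefficient polynomials in `K` of an
element are seen evaluated at `l`, and a polynomial of degree less than four is determined by its
values at the fourth roots of unity. Reading the relations `K x = x K` and `E x = x E` in these
induced modules forces `x` to be a combination of `1, K², C, C K², E F (K + K³)`, all of which are
central.
-/

section
open Complex (I inv_I I_pow_four)

/-- A triple `(e, f, k)` satisfying the defining relations of `Q`, with `k⁻¹` eliminated as `k ^ 3`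
and the commutator relation oriented so that `f * e` is rewritten in the order `e, f, k`. -/
structure QRelations {A : Type*} [Ring A] [Algebra ℂ A] (e f k : A) : Prop where
  k_pow_four : k ^ 4 = 1
  k_mul_e : k * e = -(e * k)
  k_mul_f : k * f = -(f * k)
  e_mul_e : e * e = 0
  f_mul_f : f * f = 0
  f_mul_e : f * e = e * f + (I / 2) • (k - k ^ 3)

-- Shortcut without which `neg_mul` fails to unify with the negation of `RingQuot`.
local instance : HasDistribNeg Q := inferInstance

lemma inv_two_mul_I : (2 * I)⁻¹ = -(I / 2) := by
  rw [mul_inv, inv_I]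
  ring

lemma gKi_mul_gK : gKi * gK = 1 := by
  simpa only [gK, gKi, map_mul, map_one] using RingQuot.mkAlgHom_rel ℂ QRel.KiK

lemma gK_pow_four : gK ^ 4 = 1 := by
  simpa only [gK, map_pow, map_one] using RingQuot.mkAlgHom_rel ℂ QRel.K4

lemma gKi_eq_gK_pow_three : gKi = gK ^ 3 := by
  rw [← one_mul (gK ^ 3), ← gKi_mul_gK, mul_assoc, ← pow_succ', gK_pow_four, mul_one]

lemma gK_mul_eq_neg_of_conj {x : Q} (h : gK * x * gKi = -x) : gK * x = -(x * gK) := by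
  rw [← neg_mul, ← h, mul_assoc _ gKi, gKi_mul_gK, mul_one]

@[simp] lemma gK_mul_gE : gK * gE = -(gE * gK) :=
  gK_mul_eq_neg_of_conj <| by
    simpa only [gK, gE, gKi, map_mul, map_neg] using RingQuot.mkAlgHom_rel ℂ QRel.KEKi

@[simp] lemma gK_mul_gF : gK * gF = -(gF * gK) :=
  gK_mul_eq_neg_of_conj <| by
    simpa only [gK, gF, gKi, map_mul, map_neg] using RingQuot.mkAlgHom_rel ℂ QRel.KFKi

@[simp] lemma gE_mul_gE : gE * gE = 0 := by
  simpa only [gE, map_mul, map_zero, sq] using RingQuot.mkAlgHom_rel ℂ QRel.Esq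

@[simp] lemma gF_mul_gF : gF * gF = 0 := by
  simpa only [gF, map_mul, map_zero, sq] using RingQuot.mkAlgHom_rel ℂ QRel.Fsq

@[simp] lemma gF_mul_gE : gF * gE = gE * gF + (I / 2) • (gK - gK ^ 3) := by
  have h : gE * gF - gF * gE = (2 * I)⁻¹ • (gK - gKi) := by
    simpa only [gE, gF, gK, gKi, map_mul, map_sub, map_smul] using RingQuot.mkAlgHom_rel ℂ QRel.EF
  rw [← sub_sub_cancel (gE * gF) (gF * gE), h, inv_two_mul_I, gKi_eq_gK_pow_three]
  module

lemma QRelations.exists_algHom {A : Type*} [Ring A] [Algebra ℂ A] {e f k : A}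
    (h : QRelations e f k) : ∃ ρ : Q →ₐ[ℂ] A, ρ gE = e ∧ ρ gF = f ∧ ρ gK = k := by
  have k_mul_pow : k * k ^ 3 = 1 := by rw [← pow_succ', h.k_pow_four]
  have pow_mul_k : k ^ 3 * k = 1 := by rw [← pow_succ, h.k_pow_four]
  let φ : FA →ₐ[ℂ] A := FreeAlgebra.lift ℂ (QGen.rec e f k (k ^ 3))
  have hE : φ ιE = e := FreeAlgebra.lift_ι_apply _ QGen.E
  have hF : φ ιF = f := FreeAlgebra.lift_ι_apply _ QGen.F
  have hK : φ ιK = k := FreeAlgebra.lift_ι_apply _ QGen.K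
  have hKi : φ ιKi = k ^ 3 := FreeAlgebra.lift_ι_apply _ QGen.Kinv
  have respects : ∀ ⦃x y : FA⦄, QRel x y → φ x = φ y := by
    rintro _ _ (_ | _ | _ | _ | _ | _ | _ | _) <;>
      simp only [map_mul, map_neg, map_sub, map_smul, map_pow, map_one, map_zero, hE, hF, hK, hKi]
    · exact k_mul_pow
    · exact pow_mul_k
    · rw [h.k_mul_e, neg_mul, mul_assoc, k_mul_pow, mul_one]
    · rw [h.k_mul_f, neg_mul, mul_assoc, k_mul_pow, mul_one]
    · rw [h.f_mul_e, inv_two_mul_I, neg_smul, sub_add_cancel_left]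
    · rw [sq, h.e_mul_e]
    · rw [sq, h.f_mul_f]
    · exact h.k_pow_four
  exact ⟨RingQuot.liftAlgHom ℂ ⟨φ, respects⟩,
    (RingQuot.liftAlgHom_mkAlgHom_apply ℂ φ respects ιE).trans hE,
    (RingQuot.liftAlgHom_mkAlgHom_apply ℂ φ respects ιF).trans hF,
    (RingQuot.liftAlgHom_mkAlgHom_apply ℂ φ respects ιK).trans hK⟩

lemma eq_top_of_left_stable {p : Submodule ℂ Q} (one_mem : (1 : Q) ∈ p)
    (hE : ∀ x ∈ p, gE * x ∈ p) (hF : ∀ x ∈ p, gF * x ∈ p) (hK : ∀ x ∈ p, gK * x ∈ p) :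
    p = ⊤ := by
  have stable (y : FA) : ∀ x ∈ p, RingQuot.mkAlgHom ℂ QRel y * x ∈ p := by
    induction y using FreeAlgebra.induction with
    | grade0 r =>
      intro x hx
      rw [AlgHom.commutes, ← Algebra.smul_def]
      exact p.smul_mem _ hx
    | grade1 g =>
      cases g with
      | E => exact hE
      | F => exact hF
      | K => exact hK
      | Kinv =>
        intro x hx
        change gKi * x ∈ p
        rw [gKi_eq_gK_pow_three, pow_succ, sq, mul_assoc, mul_assoc]
        exact hK _ (hK _ (hK _ hx))
    | mul a b ha hb =>
      intro x hx
      rw [map_mul, mul_assoc]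
      exact ha _ (hb _ hx)
    | add a b ha hb =>
      intro x hx
      rw [map_add, add_mul]
      exact p.add_mem (ha _ hx) (hb _ hx)
  refine eq_top_iff.2 fun x _ => ?_
  obtain ⟨y, rfl⟩ := RingQuot.mkAlgHom_surjective ℂ QRel x
  simpa only [mul_one] using stable y 1 one_mem

lemma mem_center_of_commute_generators {x : Q} (hE : Commute gE x) (hF : Commute gF x)
    (hK : Commute gK x) : x ∈ Subalgebra.center ℂ Q := by
  have mem_of_commute {y : Q} (hy : Commute y x) : y ∈ Subalgebra.centralizer ℂ {x} := by
    simpa only [Subalgebra.mem_centralizer_iff, Set.mem_singleton_iff, forall_eq] using hy.symm.eq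
  let Z := Subalgebra.centralizer ℂ {x}
  have centralizer_eq_top : Subalgebra.toSubmodule Z = ⊤ :=
    eq_top_of_left_stable Z.one_mem (fun _ => Z.mul_mem (mem_of_commute hE))
      (fun _ => Z.mul_mem (mem_of_commute hF)) (fun _ => Z.mul_mem (mem_of_commute hK))
  refine Subalgebra.mem_center_iff.2 fun y => ?_
  have hy : y ∈ Subalgebra.toSubmodule Z := by
    rw [centralizer_eq_top]
    exact Submodule.mem_top
  exact ((Subalgebra.mem_centralizer_iff ℂ).1 hy x rfl).symm

@[simp] lemma gK_mul_gE_mul (x : Q) : gK * (gE * x) = -(gE * (gK * x)) := by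
  rw [← mul_assoc, gK_mul_gE, neg_mul, mul_assoc]

@[simp] lemma gK_mul_gF_mul (x : Q) : gK * (gF * x) = -(gF * (gK * x)) := by
  rw [← mul_assoc, gK_mul_gF, neg_mul, mul_assoc]

@[simp] lemma gE_mul_gE_mul (x : Q) : gE * (gE * x) = 0 := by
  rw [← mul_assoc, gE_mul_gE, zero_mul]

@[simp] lemma gF_mul_gF_mul (x : Q) : gF * (gF * x) = 0 := by
  rw [← mul_assoc, gF_mul_gF, zero_mul]

@[simp] lemma gF_mul_gE_mul (x : Q) :
    gF * (gE * x) = gE * (gF * x) + (I / 2) • (gK * x - gK ^ 3 * x) := by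
  rw [← mul_assoc, gF_mul_gE, add_mul, smul_mul_assoc, sub_mul, mul_assoc]

@[simp] lemma gK_mul_gK_mul_gK_mul_gK : gK * (gK * (gK * gK)) = 1 := by
  rw [← gK_pow_four, pow_succ', pow_succ', sq]

@[simp] lemma gK_mul_gK_mul_gK_mul_gK_mul (x : Q) : gK * (gK * (gK * (gK * x))) = x := by
  simpa only [mul_assoc, one_mul] using congrArg (· * x) gK_mul_gK_mul_gK_mul_gK

/-- Generator `E` on the induced module `Q ⊗_{ℂ[K]} ℂ_l`, where `K` acts on `ℂ_l` by `l` (a fourth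
root of unity), in the basis `v, E v, F v, E F v`. -/
def indE : Matrix (Fin 4) (Fin 4) ℂ := !![0, 0, 0, 0; 1, 0, 0, 0; 0, 0, 0, 0; 0, 0, 1, 0]

/-- Generator `F` on the induced module of `indE`. -/
def indF (l : ℂ) : Matrix (Fin 4) (Fin 4) ℂ :=
  !![0, I / 2 * (l - l ^ 3), 0, 0; 0, 0, 0, 0; 1, 0, 0, -(I / 2 * (l - l ^ 3)); 0, 1, 0, 0]

/-- Eigenvalues of `K` on the induced module of `indE`. -/
def indWeight (l : ℂ) : Fin 4 → ℂ := ![l, -l, -l, l]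

lemma qRelations_ind {l : ℂ} (hl : l ^ 4 = 1) :
    QRelations indE (indF l) (Matrix.diagonal (indWeight l)) where
  k_pow_four := by
    rw [Matrix.diagonal_pow, ← Matrix.diagonal_one]
    congr 1
    ext i
    fin_cases i <;> simp [indWeight, hl, Even.neg_pow (by decide : Even 4)]
  k_mul_e := by
    ext i j
    rw [Matrix.diagonal_mul, Matrix.neg_apply, Matrix.mul_diagonal]
    fin_cases i <;> fin_cases j <;> simp [indE, indWeight]
  k_mul_f := by
    ext i j
    rw [Matrix.diagonal_mul, Matrix.neg_apply, Matrix.mul_diagonal]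
    fin_cases i <;> fin_cases j <;> simp [indF, indWeight, mul_comm]
  e_mul_e := by
    ext i j
    fin_cases i <;> fin_cases j <;> simp [indE]
  f_mul_f := by
    ext i j
    fin_cases i <;> fin_cases j <;> simp [indF]
  f_mul_e := by
    ext i j
    fin_cases i <;> fin_cases j <;>
      simp [indE, indF, indWeight, Matrix.diagonal_pow] <;> ring

/-- The words in `E, F` that, multiplied by powers of `K`, form the PBW basis of `Q`. -/
def pbwWord : Fin 4 → Q := ![1, gE, gF, gE * gF]

/-- The PBW monomials `w * K ^ k`. -/
def pbw (p : Fin 4 × Fin 4) : Q := pbwWord p.1 * gK ^ (p.2 : ℕ)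

/-- The value at `K = l` of the polynomial in `K` that multiplies the `i`-th word in
`∑ p, c p • pbw p`. -/
def rowEval (c : Fin 4 × Fin 4 → ℂ) (i : Fin 4) (l : ℂ) : ℂ := ∑ k, c (i, k) * l ^ (k : ℕ)

section Induced

variable {l : ℂ} {ρ : Q →ₐ[ℂ] Matrix (Fin 4) (Fin 4) ℂ}

lemma ind_sum_pbw (hK : ρ gK = Matrix.diagonal (indWeight l)) (c : Fin 4 × Fin 4 → ℂ)
    (i j : Fin 4) :
    ρ (∑ p, c p • pbw p) i j =
      ∑ m, rowEval c m (indWeight l j) * ρ (pbwWord m) i j := by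
  simp only [Fintype.sum_prod_type, map_sum, map_smul, pbw, map_mul, map_pow, hK,
    Matrix.diagonal_pow, Matrix.sum_apply, Matrix.smul_apply, Matrix.mul_diagonal, Pi.pow_apply,
    smul_eq_mul, Finset.sum_mul, rowEval]
  exact Finset.sum_congr rfl fun m _ => Finset.sum_congr rfl fun k _ => by ring

lemma ind_sum_pbw_col_zero (hE : ρ gE = indE) (hF : ρ gF = indF l)
    (hK : ρ gK = Matrix.diagonal (indWeight l)) (c : Fin 4 × Fin 4 → ℂ) (i : Fin 4) :
    ρ (∑ p, c p • pbw p) i 0 = rowEval c i l := by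
  rw [ind_sum_pbw hK]
  fin_cases i <;> simp [Fin.sum_univ_four, pbwWord, hE, hF, indE, indF, indWeight]

lemma ind_sum_pbw_one_one (hE : ρ gE = indE) (hF : ρ gF = indF l)
    (hK : ρ gK = Matrix.diagonal (indWeight l)) (c : Fin 4 × Fin 4 → ℂ) :
    ρ (∑ p, c p • pbw p) 1 1 =
      rowEval c 0 (-l) + I / 2 * (l - l ^ 3) * rowEval c 3 (-l) := by
  rw [ind_sum_pbw hK]
  simp [Fin.sum_univ_four, pbwWord, hE, hF, indE, indF, indWeight, mul_comm]

end Induced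

lemma I_pow_injective : Function.Injective fun j : Fin 4 => I ^ (j : ℕ) := fun i j h =>
  Fin.ext (Complex.isPrimitiveRoot_I.pow_inj i.isLt j.isLt h)

lemma row_eq_zero_of_rowEval_eq_zero {c : Fin 4 × Fin 4 → ℂ} {i : Fin 4}
    (h : ∀ l : ℂ, l ^ 4 = 1 → rowEval c i l = 0) : (fun k => c (i, k)) = 0 :=
  Matrix.eq_zero_of_forall_index_sum_mul_pow_eq_zero I_pow_injective fun j =>
    h _ (by rw [← pow_mul, mul_comm, pow_mul, I_pow_four, one_pow])

lemma linearIndependent_pbw : LinearIndependent ℂ pbw := by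
  refine Fintype.linearIndependent_iff.2 fun c hc ⟨i, k⟩ => ?_
  suffices row_eq_zero : (fun k => c (i, k)) = 0 from congrFun row_eq_zero k
  refine row_eq_zero_of_rowEval_eq_zero fun l hl => ?_
  obtain ⟨ρ, hE, hF, hK⟩ := (qRelations_ind hl).exists_algHom
  rw [← ind_sum_pbw_col_zero hE hF hK, hc, map_zero, Matrix.zero_apply]

lemma gK_pow_mod_four (n : ℕ) : gK ^ (n % 4) = gK ^ n := by
  conv_rhs => rw [← Nat.div_add_mod n 4, pow_add, pow_mul, gK_pow_four, one_pow, one_mul]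

lemma pbwWord_mul_gK_pow_mem_span (i : Fin 4) (n : ℕ) :
    pbwWord i * gK ^ n ∈ Submodule.span ℂ (Set.range pbw) := by
  rw [← gK_pow_mod_four]
  exact Submodule.subset_span ⟨(i, ⟨n % 4, Nat.mod_lt n four_pos⟩), rfl⟩

lemma span_range_pbw : Submodule.span ℂ (Set.range pbw) = ⊤ := by
  have left_stable {a : Q} (ha : ∀ i (n : ℕ), a * (pbwWord i * gK ^ n) ∈
      Submodule.span ℂ (Set.range pbw)) : ∀ x ∈ Submodule.span ℂ (Set.range pbw),
      a * x ∈ Submodule.span ℂ (Set.range pbw) := fun x hx =>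
    (Submodule.span_le (p := (Submodule.span ℂ (Set.range pbw)).comap
      (LinearMap.mulLeft ℂ a))).2 (by rintro _ ⟨⟨i, n⟩, rfl⟩; exact ha i n) hx
  have mem := pbwWord_mul_gK_pow_mem_span
  refine eq_top_of_left_stable ?_ (left_stable fun i n => ?_) (left_stable fun i n => ?_)
    (left_stable fun i n => ?_)
  · simpa [pbwWord] using mem 0 0
  · fin_cases i
    · simpa [pbwWord] using mem 1 n
    · simp [pbwWord]
    · simpa [pbwWord, mul_assoc] using mem 3 n
    · simp [pbwWord, mul_assoc]
  · fin_cases i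
    · simpa [pbwWord] using mem 2 n
    · have h := add_mem (mem 3 n) (Submodule.smul_mem _ (I / 2)
        (sub_mem (mem 0 (n + 1)) (mem 0 (n + 3))))
      simpa [pbwWord, mul_assoc, add_mul, ← pow_succ', ← pow_add, add_comm] using h
    · simp [pbwWord]
    · have h := Submodule.smul_mem _ (I / 2) (sub_mem (mem 2 (n + 3)) (mem 2 (n + 1)))
      simpa [pbwWord, mul_assoc, add_mul, pow_succ', smul_sub, neg_add_eq_sub] using h
  · fin_cases i
    · simpa [pbwWord, ← pow_succ'] using mem 0 (n + 1)
    · simpa [pbwWord, ← pow_succ'] using neg_mem (mem 1 (n + 1))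
    · simpa [pbwWord, ← pow_succ'] using neg_mem (mem 2 (n + 1))
    · simpa [pbwWord, mul_assoc, ← pow_succ'] using mem 3 (n + 1)

lemma exists_eq_sum_pbw (x : Q) : ∃ c : Fin 4 × Fin 4 → ℂ, x = ∑ p, c p • pbw p := by
  have hx : x ∈ Submodule.span ℂ (Set.range pbw) := by
    rw [span_range_pbw]
    exact Submodule.mem_top
  obtain ⟨c, hc⟩ := (Submodule.mem_span_range_iff_exists_fun ℂ).1 hx
  exact ⟨c, hc.symm⟩

lemma commute_gE_gK_sq : Commute gE (gK ^ 2) := by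
  simp [Commute, SemiconjBy, sq, mul_assoc]

lemma commute_gF_gK_sq : Commute gF (gK ^ 2) := by
  simp [Commute, SemiconjBy, sq, mul_assoc]

lemma gK_sq_mem_center : gK ^ 2 ∈ Subalgebra.center ℂ Q :=
  mem_center_of_commute_generators commute_gE_gK_sq commute_gF_gK_sq (Commute.self_pow gK 2)

lemma Cas_eq : Cas = gE * gF + (I / 4) • (gK - gK ^ 3) := by
  rw [Cas, gF_mul_gE, gKi_eq_gK_pow_three]
  module

lemma Cas_mem_center : Cas ∈ Subalgebra.center ℂ Q := by
  refine mem_center_of_commute_generators ?_ ?_ ?_ <;> rw [Cas_eq, Commute, SemiconjBy]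
  · simp [pow_succ, mul_assoc, mul_add, add_mul, mul_sub, sub_mul]
    module
  · simp [pow_succ, mul_assoc, mul_add, add_mul, mul_sub, sub_mul]
    module
  · simp [pow_succ, mul_assoc, mul_add, add_mul, mul_sub, sub_mul]

/-- A central element annihilating every simple `Q`-module; it completes the Drinfeld images of the
simple modules to a basis of the centre. -/
def radicalCentral : Q := gE * gF * (gK + gK ^ 3)

lemma radicalCentral_mem_center : radicalCentral ∈ Subalgebra.center ℂ Q := by
  refine mem_center_of_commute_generators ?_ ?_ ?_ <;> rw [radicalCentral, Commute, SemiconjBy]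
  · simp [pow_succ, mul_assoc, mul_add, add_mul, mul_sub]
    module
  · simp [pow_succ, mul_assoc, mul_add, add_mul]
  · simp [pow_succ, mul_assoc, mul_add, add_mul]

/-- The basis `1, K², C, C K², E F (K + K³)` of the centre of `Q`. -/
def centerBasis : Fin 5 → Q := ![1, gK ^ 2, Cas, Cas * gK ^ 2, radicalCentral]

lemma centerBasis_mem_center (i : Fin 5) : centerBasis i ∈ Subalgebra.center ℂ Q := by
  fin_cases i
  · exact one_mem _
  · exact gK_sq_mem_center
  · exact Cas_mem_center
  · exact mul_mem Cas_mem_center gK_sq_mem_center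
  · exact radicalCentral_mem_center

/-- Coordinates of `∑ i, a i • centerBasis i` in the PBW basis. -/
def centerCoeff (a : Fin 5 → ℂ) (p : Fin 4 × Fin 4) : ℂ :=
  !![a 0, I / 4 * (a 2 - a 3), a 1, -(I / 4 * (a 2 - a 3));
     0, 0, 0, 0;
     0, 0, 0, 0;
     a 2, a 4, a 3, a 4] p.1 p.2

lemma sum_centerBasis_eq_sum_pbw (a : Fin 5 → ℂ) :
    ∑ i, a i • centerBasis i = ∑ p, centerCoeff a p • pbw p := by
  have gK_pow_five : gK ^ 5 = gK := by rw [pow_succ, gK_pow_four, one_mul]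
  simp [Fin.sum_univ_five, Fintype.sum_prod_type, Fin.sum_univ_four, centerBasis, centerCoeff, pbw,
    pbwWord, Cas_eq, radicalCentral, add_mul, sub_mul, mul_add, ← pow_succ', ← pow_add, gK_pow_five]
  module

lemma linearIndependent_centerBasis : LinearIndependent ℂ centerBasis := by
  refine Fintype.linearIndependent_iff.2 fun a ha => ?_
  rw [sum_centerBasis_eq_sum_pbw] at ha
  have coeff_eq_zero := Fintype.linearIndependent_iff.1 linearIndependent_pbw _ ha
  intro i
  fin_cases i
  exacts [coeff_eq_zero (0, 0), coeff_eq_zero (0, 2), coeff_eq_zero (3, 0), coeff_eq_zero (3, 2),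
    coeff_eq_zero (3, 1)]

lemma rowEval_eq_zero_of_commute_gK {c : Fin 4 × Fin 4 → ℂ} (h : Commute gK (∑ p, c p • pbw p))
    {l : ℂ} (hl : l ^ 4 = 1) {i : Fin 4} (hi : i = 1 ∨ i = 2) : rowEval c i l = 0 := by
  obtain ⟨ρ, hE, hF, hK⟩ := (qRelations_ind hl).exists_algHom
  have hρ := congrFun₂ (h.map ρ).eq i 0
  rw [hK, Matrix.diagonal_mul, Matrix.mul_diagonal, ind_sum_pbw_col_zero hE hF hK] at hρ
  have l_ne_zero : l ≠ 0 := by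
    rintro rfl
    norm_num at hl
  have weight_neg : indWeight l i = -l := by rcases hi with rfl | rfl <;> rfl
  have weight_zero : indWeight l 0 = l := rfl
  rw [weight_neg, weight_zero] at hρ
  have two_mul_eq_zero : 2 * l * rowEval c i l = 0 := by linear_combination -hρ
  simpa [l_ne_zero] using two_mul_eq_zero

lemma rowEval_zero_eq_of_commute_gE {c : Fin 4 × Fin 4 → ℂ} (h : Commute gE (∑ p, c p • pbw p))
    {l : ℂ} (hl : l ^ 4 = 1) :
    rowEval c 0 l = rowEval c 0 (-l) + I / 2 * (l - l ^ 3) * rowEval c 3 (-l) := by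
  obtain ⟨ρ, hE, hF, hK⟩ := (qRelations_ind hl).exists_algHom
  rw [← ind_sum_pbw_one_one hE hF hK, ← ind_sum_pbw_col_zero hE hF hK]
  have hρ := congrFun₂ (h.map ρ).eq 1 0
  simpa [Matrix.mul_apply, Fin.sum_univ_four, hE, indE] using hρ

lemma eq_centerCoeff_of_commute {c : Fin 4 × Fin 4 → ℂ} (hE : Commute gE (∑ p, c p • pbw p))
    (hK : Commute gK (∑ p, c p • pbw p)) :
    c = centerCoeff ![c (0, 0), c (0, 2), c (3, 0), c (3, 2), c (3, 1)] := by
  have row_eq_zero {i : Fin 4} (hi : i = 1 ∨ i = 2) (k : Fin 4) : c (i, k) = 0 :=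
    congrFun (row_eq_zero_of_rowEval_eq_zero fun _ hl => rowEval_eq_zero_of_commute_gK hK hl hi) k
  have rowEval_eq (i : Fin 4) (l : ℂ) :
      rowEval c i l = c (i, 0) + c (i, 1) * l + c (i, 2) * l ^ 2 + c (i, 3) * l ^ 3 := by
    simp [rowEval, Fin.sum_univ_four]
  have neg_I_pow_four : (-I) ^ 4 = 1 := by rw [Even.neg_pow (by decide), I_pow_four]
  have at_one := rowEval_zero_eq_of_commute_gE hE (one_pow 4)
  have at_I := rowEval_zero_eq_of_commute_gE hE I_pow_four
  have at_neg_I := rowEval_zero_eq_of_commute_gE hE neg_I_pow_four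
  simp only [rowEval_eq, neg_neg] at at_one at_I at_neg_I
  have I_mul_I : I * I = -1 := Complex.I_mul_I
  have coeff_K : c (0, 1) = I / 4 * (c (3, 0) - c (3, 2)) := by grind
  have coeff_K_pow_three : c (0, 3) = -(I / 4 * (c (3, 0) - c (3, 2))) := by grind
  have coeff_EFK_pow_three : c (3, 3) = c (3, 1) := by grind
  ext ⟨i, k⟩
  fin_cases i
  · fin_cases k
    exacts [rfl, coeff_K, rfl, coeff_K_pow_three]
  · exact (row_eq_zero (.inl rfl) k).trans (by fin_cases k <;> rfl)
  · exact (row_eq_zero (.inr rfl) k).trans (by fin_cases k <;> rfl)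
  · fin_cases k
    exacts [rfl, rfl, rfl, coeff_EFK_pow_three]

lemma span_range_centerBasis :
    Submodule.span ℂ (Set.range centerBasis) = Subalgebra.toSubmodule (Subalgebra.center ℂ Q) := by
  refine le_antisymm (Submodule.span_le.2 (Set.range_subset_iff.2 centerBasis_mem_center)) ?_
  intro x hx
  have commute (y : Q) : Commute y x := (Subalgebra.mem_center_iff (R := ℂ)).1 hx y
  obtain ⟨c, rfl⟩ := exists_eq_sum_pbw x
  rw [eq_centerCoeff_of_commute (commute gE) (commute gK), ← sum_centerBasis_eq_sum_pbw]
  exact sum_mem fun i _ => Submodule.smul_mem _ _ (Submodule.subset_span ⟨i, rfl⟩)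

theorem finrank_center : Module.finrank ℂ (Subalgebra.center ℂ Q) = 5 := by
  rw [← Subalgebra.finrank_toSubmodule, ← span_range_centerBasis,
    finrank_span_eq_card linearIndependent_centerBasis, Fintype.card_fin]

lemma linearIndependent_drinfeldImages :
    LinearIndependent ℂ ![(1 : Q), -(gK ^ 2), (4 : ℂ) • Cas, -((4 : ℂ) • (Cas * gK ^ 2))] := by
  have four_ne_zero : (4 : ℂ) ≠ 0 := by norm_num
  let u : Fin 4 → ℂˣ := ![1, -1, Units.mk0 4 four_ne_zero, -Units.mk0 4 four_ne_zero]
  convert (linearIndependent_centerBasis.comp (Fin.castSucc : Fin 4 → Fin 5)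
    (Fin.castSucc_injective 4)).units_smul u
  ext i
  fin_cases i <;> simp [u, centerBasis, Units.smul_def]

lemma t2_mul_t2 (a b c d : Q) : t2 a b * t2 c d = t2 (a * c) (b * d) :=
  Algebra.TensorProduct.tmul_mul_tmul a c b d

lemma commute_t2_of_mem_center {a b : Q} (ha : a ∈ Subalgebra.center ℂ Q)
    (hb : b ∈ Subalgebra.center ℂ Q) (x : TP2 ℂ Q) : Commute (t2 a b) x := by
  induction x using TensorProduct.induction_on with
  | zero => exact .zero_right _
  | add x y hx hy => exact hx.add_right hy
  | tmul c d =>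
    change t2 a b * t2 c d = t2 c d * t2 a b
    rw [t2_mul_t2, t2_mul_t2, Subalgebra.mem_center_iff.1 ha, Subalgebra.mem_center_iff.1 hb]

lemma e0_mem_center : e0 ∈ Subalgebra.center ℂ Q :=
  Subalgebra.smul_mem _ (add_mem (one_mem _) gK_sq_mem_center) _

lemma e1_mem_center : e1 ∈ Subalgebra.center ℂ Q :=
  Subalgebra.smul_mem _ (sub_mem (one_mem _) gK_sq_mem_center) _

lemma e0_mul_e0 : e0 * e0 = e0 := by
  simp only [e0, sq, mul_add, add_mul, smul_mul_assoc, mul_smul_comm, one_mul, mul_one,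
    mul_assoc, gK_mul_gK_mul_gK_mul_gK]
  module

lemma e1_mul_e1 : e1 * e1 = e1 := by
  simp only [e1, sq, mul_sub, sub_mul, smul_mul_assoc, mul_smul_comm, one_mul, mul_one,
    mul_assoc, gK_mul_gK_mul_gK_mul_gK]
  module

lemma e0_mul_e1 : e0 * e1 = 0 := by
  simp only [e0, e1, sq, mul_sub, add_mul, smul_mul_assoc, mul_smul_comm, one_mul, mul_one,
    mul_assoc, gK_mul_gK_mul_gK_mul_gK]
  module

lemma e1_mul_e0 : e1 * e0 = 0 := by
  rw [Subalgebra.mem_center_iff.1 e0_mem_center, e0_mul_e1]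

lemma e0_add_e1 : e0 + e1 = 1 := by
  rw [e0, e1]
  module

lemma neg_one_smul_e0_add_e1 : (-1 : ℂ) • e0 + e1 = -gK ^ 2 := by
  rw [e0, e1]
  module

/-- The tensor flip as an algebra automorphism; `flipA` only records its linearity. -/
def flipHom : TP2 ℂ Q →ₐ[ℂ] TP2 ℂ Q := (Algebra.TensorProduct.comm ℂ Q Q).toAlgHom

lemma flipHom_t2 (a b : Q) : flipHom (t2 a b) = t2 b a := rfl

lemma Mmat_eq (β : ℂ) :
    Mmat β = flipHom R00 * R00 * t2 e0 e0 + flipHom R10 * R01 * t2 e0 e1 +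
      flipHom R01 * R10 * t2 e1 e0 + flipHom (R11 β) * R11 β * t2 e1 e1 := by
  have mul_mul_t2 {a b c d : Q} (x y : TP2 ℂ Q) (ha : a ∈ Subalgebra.center ℂ Q)
      (hb : b ∈ Subalgebra.center ℂ Q) :
      x * t2 a b * (y * t2 c d) = x * y * t2 (a * c) (b * d) := by
    rw [(commute_t2_of_mem_center ha hb y).mul_mul_mul_comm, t2_mul_t2]
  have t2_zero_left (a : Q) : t2 0 a = 0 := TensorProduct.zero_tmul _ _
  have t2_zero_right (a : Q) : t2 a 0 = 0 := TensorProduct.tmul_zero _ _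
  change flipHom (Rmat β) * Rmat β = _
  simp only [Rmat, map_add, map_mul, flipHom_t2, add_mul, mul_add, mul_mul_t2, e0_mem_center,
    e1_mem_center, e0_mul_e0, e1_mul_e1, e0_mul_e1, e1_mul_e0, t2_zero_left, t2_zero_right,
    mul_zero, add_zero, zero_add]

/-- The slice map `ρ ⊗ id` of a one-dimensional representation `ρ`. -/
def charSlice (ρ : Q →ₐ[ℂ] ℂ) : TP2 ℂ Q →ₐ[ℂ] Q :=
  (Algebra.TensorProduct.lid ℂ Q).toAlgHom.comp (Algebra.TensorProduct.map ρ (AlgHom.id ℂ Q))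

lemma charSlice_t2 (ρ : Q →ₐ[ℂ] ℂ) (a b : Q) : charSlice ρ (t2 a b) = ρ a • b := rfl

lemma drinfeldImg_qTr1 (β : ℂ) (ρ : Q →ₐ[ℂ] ℂ) :
    drinfeldImg β (qTr1 ρ) = ρ gK • charSlice ρ (Mmat β) := by
  rw [drinfeldImg]
  induction Mmat β using TensorProduct.induction_on with
  | zero => simp only [map_zero, smul_zero]
  | add x y hx hy => rw [map_add, map_add, hx, hy, map_add, smul_add]
  | tmul a b =>
    change ρ (gK * a) • b = ρ gK • ρ a • b
    rw [map_mul, mul_smul]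

lemma drinfeldImg_of_one_dim (β : ℂ) {s : ℂ} (hs : s ^ 2 = 1) {ρ : Q →ₐ[ℂ] ℂ} (hE : ρ gE = 0)
    (hF : ρ gF = 0) (hK : ρ gK = s) : drinfeldImg β (qTr1 ρ) = s • e0 + e1 := by
  have map_e0 : ρ e0 = 1 := by
    simp only [e0, map_smul, map_add, map_one, map_pow, hK, hs, smul_eq_mul]
    norm_num
  have map_e1 : ρ e1 = 0 := by simp [e1, hK, hs]
  have slice_R00 : charSlice ρ R00 = (2 : ℂ)⁻¹ • (1 + gK + s • 1 - s • gK) := by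
    simp [R00, charSlice_t2, hE, hK]
  have slice_flip_R00 : charSlice ρ (flipHom R00) = (2 : ℂ)⁻¹ • (1 + s • 1 + gK - s • gK) := by
    simp [R00, flipHom_t2, charSlice_t2, hF, hK]
  have slice_R01 : charSlice ρ R01 = (2 : ℂ)⁻¹ • (1 - I • gK + s • 1 + I • s • gK) := by
    simp [R01, eFK, eEFK, charSlice_t2, hE, hF, hK]
  have slice_flip_R10 :
      charSlice ρ (flipHom R10) = (2 : ℂ)⁻¹ • ((1 + s • 1 - I • gK + I • s • gK) * s • 1) := by
    simp [R10, eFK, eEF, flipHom_t2, charSlice_t2, hE, hF, hK]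
  rw [drinfeldImg_qTr1, Mmat_eq]
  simp only [map_add, map_mul, charSlice_t2, map_e0, map_e1, slice_R00, slice_flip_R00, slice_R01,
    slice_flip_R10, hK, one_smul, zero_smul, mul_zero, add_zero]
  simp only [e0, e1, sq, smul_add, mul_add, add_mul, mul_sub, sub_mul, mul_one, one_mul,
    mul_smul_comm, smul_mul_assoc, mul_assoc, gK_mul_gK_mul_gK_mul_gK]
  have I_mul_I : I * I = -1 := Complex.I_mul_I
  match_scalars <;> grind

/-- The slice map `ρ ⊗ id` of a matrix representation `ρ`. -/
def matSlice (ρ : Q →ₐ[ℂ] Matrix (Fin 2) (Fin 2) ℂ) : TP2 ℂ Q →ₐ[ℂ] Matrix (Fin 2) (Fin 2) Q :=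
  ((matrixEquivTensor (Fin 2) ℂ Q).symm.toAlgHom.comp
    (Algebra.TensorProduct.comm ℂ (Matrix (Fin 2) (Fin 2) ℂ) Q).toAlgHom).comp
      (Algebra.TensorProduct.map ρ (AlgHom.id ℂ Q))

lemma matSlice_t2 (ρ : Q →ₐ[ℂ] Matrix (Fin 2) (Fin 2) ℂ) (a b : Q) :
    matSlice ρ (t2 a b) = (ρ a).map (· • b) := by
  change (matrixEquivTensor (Fin 2) ℂ Q).symm (b ⊗ₜ ρ a) = _
  rw [matrixEquivTensor_apply_symm]
  ext i j
  change b * algebraMap ℂ Q (ρ a i j) = ρ a i j • b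
  rw [← Algebra.commutes, ← Algebra.smul_def]

lemma drinfeldImg_qTrM (β : ℂ) (ρ : Q →ₐ[ℂ] Matrix (Fin 2) (Fin 2) ℂ) :
    drinfeldImg β (qTrM ρ) = (matSlice ρ (t2 gK 1) * matSlice ρ (Mmat β)).trace := by
  rw [drinfeldImg]
  induction Mmat β using TensorProduct.induction_on with
  | zero => simp only [map_zero, mul_zero, Matrix.trace_zero]
  | add x y hx hy => rw [map_add, map_add, hx, hy, map_add, mul_add, Matrix.trace_add]
  | tmul a b =>
    change (ρ (gK * a)).trace • b = (matSlice ρ (t2 gK 1) * matSlice ρ (t2 a b)).trace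
    rw [← map_mul, t2_mul_t2, matSlice_t2, one_mul, Matrix.trace_fin_two, Matrix.trace_fin_two,
      Matrix.map_apply, Matrix.map_apply, add_smul]

/-- `ρ` is the two-dimensional simple module `X⁺₂` (for `s = 1`) or `X⁻₂` (for `s = -1`), written
in the basis `v₀, v₁`. -/
structure IsTwoDimSimple (s : ℂ) (ρ : Q →ₐ[ℂ] Matrix (Fin 2) (Fin 2) ℂ) : Prop where
  sq_eq_one : s ^ 2 = 1
  map_gE : ρ gE = !![0, s; 0, 0]
  map_gF : ρ gF = !![0, 0; 1, 0]
  map_gK : ρ gK = !![s * I, 0; 0, -(s * I)]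

namespace IsTwoDimSimple

variable {s : ℂ} {ρ : Q →ₐ[ℂ] Matrix (Fin 2) (Fin 2) ℂ}

lemma matSlice_R10 (h : IsTwoDimSimple s ρ) :
    matSlice ρ R10 = (2 : ℂ)⁻¹ •
      (!![(1 + s) • 1 + (1 - s) • gK, 0; 0, (1 - s) • 1 + (1 + s) • gK] *
        !![gK + (1 + I) • eEF, (s * (1 - I)) • eFK; (s * (1 + I)) • gE, gK - (1 - I) • eEF]) := by
  have I_mul_I : I * I = -1 := Complex.I_mul_I
  obtain ⟨hs, hE, hF, hK⟩ := h
  rw [R10, map_smul, map_mul]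
  congr 2
  · ext i j
    fin_cases i <;> fin_cases j <;> simp [matSlice_t2, hK] <;> match_scalars <;> grind
  · ext i j
    fin_cases i <;> fin_cases j <;> simp [matSlice_t2, eFK, eEFK, hE, hF, hK] <;>
      match_scalars <;> grind

lemma matSlice_flip_R01 (h : IsTwoDimSimple s ρ) :
    matSlice ρ (flipHom R01) = (2 : ℂ)⁻¹ •
      (!![(1 + s) • 1 + (1 - s) • gK, 0; 0, (1 - s) • 1 + (1 + s) • gK] *
        !![1 - (1 - I) • eEFK, (-(1 + I)) • eFK; (-(1 - I)) • gE, 1 + (1 + I) • eEFK]) := by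
  have I_mul_I : I * I = -1 := Complex.I_mul_I
  obtain ⟨hs, hE, hF, hK⟩ := h
  rw [R01, map_smul, map_smul, map_mul, map_mul]
  congr 2
  · ext i j
    fin_cases i <;> fin_cases j <;> simp [flipHom_t2, matSlice_t2, hK] <;> match_scalars <;> grind
  · ext i j
    fin_cases i <;> fin_cases j <;>
      simp [flipHom_t2, matSlice_t2, eEK, eEFK, hE, hF, hK] <;> match_scalars <;> grind

lemma matSlice_R11 (h : IsTwoDimSimple s ρ) (β : ℂ) :
    matSlice ρ (R11 β) = (β / 2) •
      (!![(1 + s) • 1 - (I * (1 - s)) • gK, 0; 0, (1 - s) • 1 - (I * (1 + s)) • gK] *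
        !![(-(s * I)) • 1 + (s * (1 - I)) • eEFK, (2 : ℂ) • gF;
           0, (-s) • 1 - (s * (1 + I)) • eEFK]) := by
  have I_mul_I : I * I = -1 := Complex.I_mul_I
  obtain ⟨hs, hE, hF, hK⟩ := h
  rw [R11, map_smul, map_mul]
  congr 2
  · ext i j
    fin_cases i <;> fin_cases j <;> simp [matSlice_t2, hK] <;> match_scalars <;> grind
  · ext i j
    fin_cases i <;> fin_cases j <;> simp [matSlice_t2, eEF, eEK, hE, hF, hK] <;>
      match_scalars <;> grind

lemma matSlice_flip_R11 (h : IsTwoDimSimple s ρ) (β : ℂ) :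
    matSlice ρ (flipHom (R11 β)) = (β / 2) •
      (!![(1 + s) • 1 - (I * (1 - s)) • gK, 0; 0, (1 - s) • 1 - (I * (1 + s)) • gK] *
        !![gK + (1 - I) • eEF, 0; (2 * I) • eEK, (-I) • gK - (1 + I) • eEF]) := by
  have I_mul_I : I * I = -1 := Complex.I_mul_I
  obtain ⟨hs, hE, hF, hK⟩ := h
  rw [R11, map_smul, map_smul, map_mul, map_mul]
  congr 2
  · ext i j
    fin_cases i <;> fin_cases j <;> simp [flipHom_t2, matSlice_t2, hK] <;> match_scalars <;> grind
  · ext i j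
    fin_cases i <;> fin_cases j <;>
      simp [flipHom_t2, matSlice_t2, eEF, eEFK, hE, hF, hK] <;> match_scalars <;> grind

lemma map_e0 (h : IsTwoDimSimple s ρ) : ρ e0 = 0 := by
  have sq_weight : s * I * (s * I) = -1 := by
    linear_combination I * I * h.sq_eq_one + Complex.I_mul_I
  ext i j
  fin_cases i <;> fin_cases j <;> simp [e0, sq, h.map_gK, sq_weight]

lemma map_e1 (h : IsTwoDimSimple s ρ) : ρ e1 = 1 := by
  simpa only [map_add, map_one, h.map_e0, zero_add] using congrArg ρ e0_add_e1

lemma matSlice_Mmat (h : IsTwoDimSimple s ρ) (β : ℂ) :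
    matSlice ρ (Mmat β) =
      matSlice ρ (flipHom R01) * matSlice ρ R10 * Matrix.diagonal (fun _ => e0) +
        matSlice ρ (flipHom (R11 β)) * matSlice ρ (R11 β) * Matrix.diagonal (fun _ => e1) := by
  have slice_e0 (x : Q) : matSlice ρ (t2 e0 x) = 0 := by
    ext i j
    simp [matSlice_t2, h.map_e0]
  have slice_e1 (x : Q) : matSlice ρ (t2 e1 x) = Matrix.diagonal fun _ => x := by
    ext i j
    simp [matSlice_t2, h.map_e1, Matrix.one_apply, Matrix.diagonal_apply, ite_smul]
  simp only [Mmat_eq, map_add, map_mul, slice_e0, slice_e1, mul_zero, zero_add]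

lemma matSlice_gK (h : IsTwoDimSimple s ρ) :
    matSlice ρ (t2 gK 1) = !![(s * I) • 1, 0; 0, (-(s * I)) • 1] := by
  ext i j
  fin_cases i <;> fin_cases j <;> simp [matSlice_t2, h.map_gK]

lemma trace_e0_component (h : IsTwoDimSimple s ρ) :
    (matSlice ρ (t2 gK 1) * (matSlice ρ (flipHom R01) * matSlice ρ R10)).trace * e0 =
      (4 : ℂ) • (Cas * s • e0) := by
  have I_mul_I : I * I = -1 := Complex.I_mul_I
  have hs := h.sq_eq_one
  rw [h.matSlice_gK, h.matSlice_flip_R01, h.matSlice_R10, Cas_eq, e0]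
  simp [Matrix.trace_fin_two, eEF, eFK, eEFK, pow_succ, mul_assoc, mul_add, add_mul, mul_sub,
    sub_mul]
  match_scalars <;> grind

lemma trace_e1_component (h : IsTwoDimSimple s ρ) {β : ℂ} (hβ : β ^ 2 = I) :
    (matSlice ρ (t2 gK 1) * (matSlice ρ (flipHom (R11 β)) * matSlice ρ (R11 β))).trace * e1 =
      (4 : ℂ) • (Cas * e1) := by
  have I_mul_I : I * I = -1 := Complex.I_mul_I
  have hs := h.sq_eq_one
  rw [h.matSlice_gK, h.matSlice_flip_R11, h.matSlice_R11, Cas_eq, e1]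
  simp [Matrix.trace_fin_two, eEF, eEK, eEFK, pow_succ, mul_assoc, mul_add, add_mul, mul_sub,
    sub_mul]
  match_scalars <;> grind

lemma drinfeldImg_eq (h : IsTwoDimSimple s ρ) {β : ℂ} (hβ : β ^ 2 = I) :
    drinfeldImg β (qTrM ρ) = (4 : ℂ) • (Cas * (s • e0 + e1)) := by
  have trace_mul_mul_diagonal (A B : Matrix (Fin 2) (Fin 2) Q) (x : Q) :
      (A * (B * Matrix.diagonal fun _ => x)).trace = (A * B).trace * x := by
    simp only [← mul_assoc, Matrix.trace, Matrix.diag_apply, Matrix.mul_diagonal, Finset.sum_mul]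
  rw [drinfeldImg_qTrM, h.matSlice_Mmat, mul_add, Matrix.trace_add, trace_mul_mul_diagonal,
    trace_mul_mul_diagonal, h.trace_e0_component, h.trace_e1_component hβ, mul_add, smul_add]

lemma drinfeldImg_eq_of_one (h : IsTwoDimSimple 1 ρ) {β : ℂ} (hβ : β ^ 2 = I) :
    drinfeldImg β (qTrM ρ) = (4 : ℂ) • Cas := by
  rw [h.drinfeldImg_eq hβ, one_smul, e0_add_e1, mul_one]

lemma drinfeldImg_eq_of_neg_one (h : IsTwoDimSimple (-1) ρ) {β : ℂ} (hβ : β ^ 2 = I) :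
    drinfeldImg β (qTrM ρ) = -((4 : ℂ) • (Cas * gK ^ 2)) := by
  rw [h.drinfeldImg_eq hβ, neg_one_smul_e0_add_e1, mul_neg, smul_neg]

end IsTwoDimSimple

lemma exists_one_dim {s : ℂ} (hs : s ^ 2 = 1) :
    ∃ ρ : Q →ₐ[ℂ] ℂ, ρ gE = 0 ∧ ρ gF = 0 ∧ ρ gK = s :=
  QRelations.exists_algHom
    { k_pow_four := by linear_combination (s ^ 2 + 1) * hs
      k_mul_e := by simp
      k_mul_f := by simp
      e_mul_e := mul_zero 0
      f_mul_f := mul_zero 0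
      f_mul_e := by simp [pow_succ s 2, hs] }

lemma exists_isTwoDimSimple {s : ℂ} (hs : s ^ 2 = 1) : ∃ ρ, IsTwoDimSimple s ρ := by
  have I_mul_I : I * I = -1 := Complex.I_mul_I
  have hρ : QRelations !![0, s; 0, 0] !![0, 0; 1, 0] !![s * I, 0; 0, -(s * I)] :=
    { k_pow_four := by
        ext i j
        fin_cases i <;> fin_cases j <;> simp [pow_succ] <;> grind
      k_mul_e := by simp [mul_comm]
      k_mul_f := by simp
      e_mul_e := by ext i j; fin_cases i <;> fin_cases j <;> simp
      f_mul_f := by ext i j; fin_cases i <;> fin_cases j <;> simp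
      f_mul_e := by
        ext i j
        fin_cases i <;> fin_cases j <;> simp [pow_succ] <;> grind }
  obtain ⟨ρ, hE, hF, hK⟩ := hρ.exists_algHom
  exact ⟨ρ, hs, hE, hF, hK⟩

end

/-- the simple modules `X±₁, X±₂` of `Q`, their images under the
Drinfeld mapping composed with the q-trace (balancing element `g = K⁻¹`, i.e.
`β² = i`), and the resulting four-dimensional subspace of the five-dimensional
centre. -/
theorem statement19 (β : ℂ) (hβ : β ^ 2 = Complex.I) :
    (∃ ρ : Q →ₐ[ℂ] ℂ, ρ gE = 0 ∧ ρ gF = 0 ∧ ρ gK = 1) ∧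
    (∃ ρ : Q →ₐ[ℂ] ℂ, ρ gE = 0 ∧ ρ gF = 0 ∧ ρ gK = -1) ∧
    (∃ ρ : Q →ₐ[ℂ] Matrix (Fin 2) (Fin 2) ℂ,
      ρ gE = !![0, 1; 0, 0] ∧ ρ gF = !![0, 0; 1, 0] ∧
      ρ gK = !![Complex.I, 0; 0, -Complex.I]) ∧
    (∃ ρ : Q →ₐ[ℂ] Matrix (Fin 2) (Fin 2) ℂ,
      ρ gE = !![0, -1; 0, 0] ∧ ρ gF = !![0, 0; 1, 0] ∧
      ρ gK = !![-Complex.I, 0; 0, Complex.I]) ∧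
    (∀ ρ : Q →ₐ[ℂ] ℂ, ρ gE = 0 → ρ gF = 0 → ρ gK = 1 →
      drinfeldImg β (qTr1 ρ) = 1) ∧
    (∀ ρ : Q →ₐ[ℂ] ℂ, ρ gE = 0 → ρ gF = 0 → ρ gK = -1 →
      drinfeldImg β (qTr1 ρ) = -(gK ^ 2)) ∧
    (∀ ρ : Q →ₐ[ℂ] Matrix (Fin 2) (Fin 2) ℂ,
      ρ gE = !![0, 1; 0, 0] → ρ gF = !![0, 0; 1, 0] →
      ρ gK = !![Complex.I, 0; 0, -Complex.I] →
      drinfeldImg β (qTrM ρ) = (4:ℂ) • Cas) ∧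
    (∀ ρ : Q →ₐ[ℂ] Matrix (Fin 2) (Fin 2) ℂ,
      ρ gE = !![0, -1; 0, 0] → ρ gF = !![0, 0; 1, 0] →
      ρ gK = !![-Complex.I, 0; 0, Complex.I] →
      drinfeldImg β (qTrM ρ) = -((4:ℂ) • (Cas * gK ^ 2))) ∧
    ((1:Q) ∈ Subalgebra.center ℂ Q ∧ -(gK ^ 2) ∈ Subalgebra.center ℂ Q ∧
      (4:ℂ) • Cas ∈ Subalgebra.center ℂ Q ∧
      -((4:ℂ) • (Cas * gK ^ 2)) ∈ Subalgebra.center ℂ Q) ∧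
    LinearIndependent ℂ ![(1:Q), -(gK ^ 2), (4:ℂ) • Cas, -((4:ℂ) • (Cas * gK ^ 2))] ∧
    Module.finrank ℂ (Subalgebra.center ℂ Q) = 5 := by
  refine ⟨exists_one_dim (one_pow 2), exists_one_dim neg_one_sq, ?_, ?_, fun ρ hE hF hK => ?_,
    fun ρ hE hF hK => ?_, fun ρ hE hF hK => ?_, fun ρ hE hF hK => ?_,
    ⟨one_mem _, neg_mem gK_sq_mem_center, Subalgebra.smul_mem _ Cas_mem_center _,
      neg_mem (Subalgebra.smul_mem _ (mul_mem Cas_mem_center gK_sq_mem_center) _)⟩,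
    linearIndependent_drinfeldImages, finrank_center⟩
  · obtain ⟨ρ, h⟩ := exists_isTwoDimSimple (one_pow 2)
    exact ⟨ρ, h.map_gE, h.map_gF, by simpa only [one_mul] using h.map_gK⟩
  · obtain ⟨ρ, h⟩ := exists_isTwoDimSimple neg_one_sq
    exact ⟨ρ, h.map_gE, h.map_gF, by simpa only [neg_one_mul, neg_neg] using h.map_gK⟩
  · rw [drinfeldImg_of_one_dim β (one_pow 2) hE hF hK, one_smul, e0_add_e1]
  · rw [drinfeldImg_of_one_dim β neg_one_sq hE hF hK, neg_one_smul_e0_add_e1]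
  · exact IsTwoDimSimple.drinfeldImg_eq_of_one
      ⟨one_pow 2, hE, hF, by simpa only [one_mul] using hK⟩ hβ
  · exact IsTwoDimSimple.drinfeldImg_eq_of_neg_one
      ⟨neg_one_sq, hE, hF, by simpa only [neg_one_mul, neg_neg] using hK⟩ hβ
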